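/- arXiv:2411.01413 — 3 statements merged into one kernel-verified Lean document; each statement's English description precedes it below -/
import Mathlib

section
/- Let (g, ≺, ≻, ε, α, β) be a BiHom-dendriform color algebra. Then (g, μ, ε, α, β) with μ(x,y) = x≺y + x≻y is a BiHom-associative color algebra. -/
/-- A skew-symmetric bicharacter (commutation factor) on an abelian group `Γ`
with values in `K \ {0}` (nonvanishing is a consequence of `skew`). -/
structure Bicharacter (K : Type*) (Γ : Type*) [Field K] [AddCommGroup Γ] where
  ε : Γ → Γ → K
  skew : ∀ a b, ε a b * ε b a = 1
  add_right : ∀ a b c, ε a (b + c) = ε a b * ε a c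
  add_left : ∀ a b c, ε (a + b) c = ε a c * ε b c

variable {K : Type*} [Field K] {Γ : Type*} [AddCommGroup Γ]
variable {g : Type*} [AddCommGroup g] [Module K g]
variable {V : Type*} [AddCommGroup V] [Module K V]

/-- A (multiplicative) BiHom-associative color algebra structure on a `Γ`-graded
vector space, all identities being required on homogeneous elements. -/
structure IsBiHomAssocColor (𝒜 : Γ → Submodule K g) (χ : Bicharacter K Γ)
    (μ : g →ₗ[K] g →ₗ[K] g) (α β : g →ₗ[K] g) : Prop where
  mu_even : ∀ a b, ∀ x ∈ 𝒜 a, ∀ y ∈ 𝒜 b, μ x y ∈ 𝒜 (a + b)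
  alpha_even : ∀ a, ∀ x ∈ 𝒜 a, α x ∈ 𝒜 a
  beta_even : ∀ a, ∀ x ∈ 𝒜 a, β x ∈ 𝒜 a
  comm : ∀ x, α (β x) = β (α x)
  mult_alpha : ∀ a b, ∀ x ∈ 𝒜 a, ∀ y ∈ 𝒜 b, μ (α x) (α y) = α (μ x y)
  mult_beta : ∀ a b, ∀ x ∈ 𝒜 a, ∀ y ∈ 𝒜 b, μ (β x) (β y) = β (μ x y)
  assoc : ∀ a b c, ∀ x ∈ 𝒜 a, ∀ y ∈ 𝒜 b, ∀ z ∈ 𝒜 c,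
    μ (α x) (μ y z) = μ (μ x y) (β z)

/-- A bimodule (representation) of a BiHom-associative color algebra. -/
structure IsAssocColorBimodule (𝒜 : Γ → Submodule K g) (𝒱 : Γ → Submodule K V)
    (χ : Bicharacter K Γ) (μ : g →ₗ[K] g →ₗ[K] g) (α β : g →ₗ[K] g)
    (l r : g →ₗ[K] V →ₗ[K] V) (αV βV : V →ₗ[K] V) : Prop where
  l_even : ∀ a b, ∀ x ∈ 𝒜 a, ∀ v ∈ 𝒱 b, l x v ∈ 𝒱 (a + b)
  r_even : ∀ a b, ∀ x ∈ 𝒜 a, ∀ v ∈ 𝒱 b, r x v ∈ 𝒱 (a + b)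
  alphaV_even : ∀ a, ∀ v ∈ 𝒱 a, αV v ∈ 𝒱 a
  betaV_even : ∀ a, ∀ v ∈ 𝒱 a, βV v ∈ 𝒱 a
  commV : ∀ v, αV (βV v) = βV (αV v)
  alphaV_l : ∀ a b, ∀ x ∈ 𝒜 a, ∀ v ∈ 𝒱 b, αV (l x v) = l (α x) (αV v)
  betaV_l : ∀ a b, ∀ x ∈ 𝒜 a, ∀ v ∈ 𝒱 b, βV (l x v) = l (β x) (βV v)
  alphaV_r : ∀ a b, ∀ x ∈ 𝒜 a, ∀ v ∈ 𝒱 b, αV (r x v) = r (α x) (αV v)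
  betaV_r : ∀ a b, ∀ x ∈ 𝒜 a, ∀ v ∈ 𝒱 b, βV (r x v) = r (β x) (βV v)
  l_mu : ∀ a b c, ∀ x ∈ 𝒜 a, ∀ y ∈ 𝒜 b, ∀ v ∈ 𝒱 c,
    l (α x) (l y v) = l (μ x y) (βV v)
  l_r : ∀ a b c, ∀ x ∈ 𝒜 a, ∀ y ∈ 𝒜 b, ∀ v ∈ 𝒱 c,
    l (α x) (r y v) = χ.ε a b • r (β y) (l x v)
  r_mu : ∀ a b c, ∀ x ∈ 𝒜 a, ∀ y ∈ 𝒜 b, ∀ v ∈ 𝒱 c,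
    r (μ x y) (αV v) = χ.ε a b • r (β y) (r x v)

/-- A 3-BiHom-Lie color algebra structure. -/
structure Is3BiHomLieColor (𝒜 : Γ → Submodule K g) (χ : Bicharacter K Γ)
    (m : g →ₗ[K] g →ₗ[K] g →ₗ[K] g) (α β : g →ₗ[K] g) : Prop where
  bracket_even : ∀ a b c, ∀ x ∈ 𝒜 a, ∀ y ∈ 𝒜 b, ∀ z ∈ 𝒜 c, m x y z ∈ 𝒜 (a + b + c)
  alpha_even : ∀ a, ∀ x ∈ 𝒜 a, α x ∈ 𝒜 a
  beta_even : ∀ a, ∀ x ∈ 𝒜 a, β x ∈ 𝒜 a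
  skew1 : ∀ a b c, ∀ x ∈ 𝒜 a, ∀ y ∈ 𝒜 b, ∀ z ∈ 𝒜 c,
    m (β x) (β y) (α z) = -(χ.ε a b • m (β y) (β x) (α z))
  skew2 : ∀ a b c, ∀ x ∈ 𝒜 a, ∀ y ∈ 𝒜 b, ∀ z ∈ 𝒜 c,
    m (β x) (β y) (α z) = -(χ.ε b c • m (β x) (β z) (α y))
  jacobi : ∀ a b c d e, ∀ x ∈ 𝒜 a, ∀ y ∈ 𝒜 b, ∀ z ∈ 𝒜 c, ∀ u ∈ 𝒜 d, ∀ v ∈ 𝒜 e,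
    m (β (β x)) (β (β y)) (m (β z) (β u) (α v))
      = χ.ε (a + b + c) (d + e) • m (β (β u)) (β (β v)) (m (β x) (β y) (α z))
        - (χ.ε (a + b) (c + e) * χ.ε d e) • m (β (β z)) (β (β v)) (m (β x) (β y) (α u))
        + χ.ε (a + b) (c + d) • m (β (β z)) (β (β u)) (m (β x) (β y) (α v))

/-- A multiplicative 3-BiHom-Lie color algebra structure. -/
structure IsMult3BiHomLieColor (𝒜 : Γ → Submodule K g) (χ : Bicharacter K Γ)
    (m : g →ₗ[K] g →ₗ[K] g →ₗ[K] g) (α β : g →ₗ[K] g)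
    extends Is3BiHomLieColor 𝒜 χ m α β : Prop where
  comm : ∀ x, α (β x) = β (α x)
  mult_alpha : ∀ a b c, ∀ x ∈ 𝒜 a, ∀ y ∈ 𝒜 b, ∀ z ∈ 𝒜 c,
    α (m x y z) = m (α x) (α y) (α z)
  mult_beta : ∀ a b c, ∀ x ∈ 𝒜 a, ∀ y ∈ 𝒜 b, ∀ z ∈ 𝒜 c,
    β (m x y z) = m (β x) (β y) (β z)

/-- A 3-Lie color algebra structure (`α = β = id` case), with the
ε-fundamental identity. -/
structure Is3LieColor (𝒜 : Γ → Submodule K g) (χ : Bicharacter K Γ)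
    (m : g →ₗ[K] g →ₗ[K] g →ₗ[K] g) : Prop where
  bracket_even : ∀ a b c, ∀ x ∈ 𝒜 a, ∀ y ∈ 𝒜 b, ∀ z ∈ 𝒜 c, m x y z ∈ 𝒜 (a + b + c)
  skew1 : ∀ a b c, ∀ x ∈ 𝒜 a, ∀ y ∈ 𝒜 b, ∀ z ∈ 𝒜 c,
    m x y z = -(χ.ε a b • m y x z)
  skew2 : ∀ a b c, ∀ x ∈ 𝒜 a, ∀ y ∈ 𝒜 b, ∀ z ∈ 𝒜 c,
    m x y z = -(χ.ε b c • m x z y)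
  fund : ∀ a b c d e, ∀ x ∈ 𝒜 a, ∀ y ∈ 𝒜 b, ∀ z ∈ 𝒜 c, ∀ t ∈ 𝒜 d, ∀ u ∈ 𝒜 e,
    m x y (m z t u)
      = m (m x y z) t u + χ.ε (a + b) c • m z (m x y t) u
        + χ.ε (a + b) (c + d) • m z t (m x y u)

/-- A representation of a 3-BiHom-Lie color algebra on a graded vector space `V`. -/
structure Is3BiHomLieRep (𝒜 : Γ → Submodule K g) (𝒱 : Γ → Submodule K V)
    (χ : Bicharacter K Γ) (m : g →ₗ[K] g →ₗ[K] g →ₗ[K] g) (α β : g →ₗ[K] g)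
    (ρ : g →ₗ[K] g →ₗ[K] V →ₗ[K] V) (αV βV : V →ₗ[K] V) : Prop where
  commV : ∀ v, αV (βV v) = βV (αV v)
  rho_even : ∀ a b c, ∀ x ∈ 𝒜 a, ∀ y ∈ 𝒜 b, ∀ v ∈ 𝒱 c, ρ x y v ∈ 𝒱 (a + b + c)
  alphaV_even : ∀ a, ∀ v ∈ 𝒱 a, αV v ∈ 𝒱 a
  betaV_even : ∀ a, ∀ v ∈ 𝒱 a, βV v ∈ 𝒱 a
  rho_skew : ∀ a b, ∀ x ∈ 𝒜 a, ∀ y ∈ 𝒜 b, ρ x y = -(χ.ε a b • ρ y x)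
  cond1 : ∀ a b, ∀ u ∈ 𝒜 a, ∀ v ∈ 𝒜 b,
    ρ (α u) (α v) ∘ₗ αV = αV ∘ₗ ρ u v
  cond2 : ∀ a b, ∀ u ∈ 𝒜 a, ∀ v ∈ 𝒜 b,
    ρ (β u) (β v) ∘ₗ βV = βV ∘ₗ ρ u v
  cond3 : ∀ a b c d, ∀ u ∈ 𝒜 a, ∀ v ∈ 𝒜 b, ∀ x ∈ 𝒜 c, ∀ y ∈ 𝒜 d,
    ρ (α (β u)) (α (β v)) ∘ₗ ρ x y
      = χ.ε (c + d) (a + b) • (ρ (β x) (β y) ∘ₗ ρ (α u) (α v))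
        + ρ (m (β u) (β v) x) (β y) ∘ₗ βV
        + χ.ε c (a + b) • (ρ (β x) (m (β u) (β v) y) ∘ₗ βV)
  cond4 : ∀ a b c d, ∀ u ∈ 𝒜 a, ∀ v ∈ 𝒜 b, ∀ x ∈ 𝒜 c, ∀ y ∈ 𝒜 d,
    ρ (m (β u) (β v) x) (β y) ∘ₗ βV
      = χ.ε a (c + b) • (ρ (α (β v)) (β x) ∘ₗ ρ (α u) y)
        + χ.ε c (a + b) • (ρ (β x) (α (β u)) ∘ₗ ρ (α v) y)
        + ρ (α (β u)) (α (β v)) ∘ₗ ρ x y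

/-- A noncommutative 3-BiHom-Poisson color algebra structure. -/
structure IsNC3BiHomPoissonColor (𝒜 : Γ → Submodule K g) (χ : Bicharacter K Γ)
    (m : g →ₗ[K] g →ₗ[K] g →ₗ[K] g) (μ : g →ₗ[K] g →ₗ[K] g)
    (α β : g →ₗ[K] g) : Prop where
  assoc : IsBiHomAssocColor 𝒜 χ μ α β
  lie : Is3BiHomLieColor 𝒜 χ m α β
  leibniz : ∀ a b c d, ∀ x ∈ 𝒜 a, ∀ y ∈ 𝒜 b, ∀ z ∈ 𝒜 c, ∀ t ∈ 𝒜 d,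
    m (α (β x)) (α (β y)) (μ z t)
      = μ (m (β x) (β y) z) (β t) + χ.ε (a + b) c • μ (β z) (m (α x) (α y) t)

/-- A representation of a noncommutative 3-BiHom-Poisson color algebra. -/
structure IsNC3BiHomPoissonRep (𝒜 : Γ → Submodule K g) (𝒱 : Γ → Submodule K V)
    (χ : Bicharacter K Γ) (m : g →ₗ[K] g →ₗ[K] g →ₗ[K] g) (μ : g →ₗ[K] g →ₗ[K] g)
    (α β : g →ₗ[K] g) (ρ : g →ₗ[K] g →ₗ[K] V →ₗ[K] V)
    (l r : g →ₗ[K] V →ₗ[K] V) (αV βV : V →ₗ[K] V) : Prop where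
  bimod : IsAssocColorBimodule 𝒜 𝒱 χ μ α β l r αV βV
  lierep : Is3BiHomLieRep 𝒜 𝒱 χ m α β ρ αV βV
  comp1 : ∀ a b c, ∀ x ∈ 𝒜 a, ∀ y ∈ 𝒜 b, ∀ z ∈ 𝒜 c,
    ρ (α (β x)) (α (β y)) ∘ₗ l z
      = l (m (β x) (β y) z) ∘ₗ βV + χ.ε (a + b) c • (l (β z) ∘ₗ ρ (α x) (α y))
  comp2 : ∀ a b c, ∀ x ∈ 𝒜 a, ∀ y ∈ 𝒜 b, ∀ z ∈ 𝒜 c,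
    ρ (α (β x)) (α (β y)) ∘ₗ r z
      = χ.ε (a + b) c • (r (β z) ∘ₗ ρ (β x) (β y)) + r (m (α x) (α y) z) ∘ₗ βV
  comp3 : ∀ a b c, ∀ x ∈ 𝒜 a, ∀ y ∈ 𝒜 b, ∀ z ∈ 𝒜 c,
    ρ (α (β x)) (μ (β y) (β z)) ∘ₗ (αV ∘ₗ αV ∘ₗ βV)
      = χ.ε (a + b) c • (r (α (β z)) ∘ₗ ρ x (β (β y)) ∘ₗ (αV ∘ₗ βV))
        + χ.ε a b • (l (α (β y)) ∘ₗ ρ (α x) (β z) ∘ₗ (αV ∘ₗ αV))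

/-- The 3-BiHom-ε-commutator of a ternary product, on homogeneous elements of
degrees `a`, `b`, `c`. -/
def preC (χ : Bicharacter K Γ) (m : g →ₗ[K] g →ₗ[K] g →ₗ[K] g)
    (α β : g ≃ₗ[K] g) (a b c : Γ) (x y z : g) : g :=
  m x y z - χ.ε b c • m x (β (α.symm z)) (α (β.symm y))
    + χ.ε a (b + c) • m y (β (α.symm z)) (α (β.symm x))

/-- A 3-BiHom-pre-Lie color algebra structure (with bijective structure maps). -/
structure Is3BiHomPreLieColor (𝒜 : Γ → Submodule K g) (χ : Bicharacter K Γ)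
    (m : g →ₗ[K] g →ₗ[K] g →ₗ[K] g) (α β : g ≃ₗ[K] g) : Prop where
  bracket_even : ∀ a b c, ∀ x ∈ 𝒜 a, ∀ y ∈ 𝒜 b, ∀ z ∈ 𝒜 c, m x y z ∈ 𝒜 (a + b + c)
  alpha_even : ∀ a, ∀ x ∈ 𝒜 a, α x ∈ 𝒜 a
  beta_even : ∀ a, ∀ x ∈ 𝒜 a, β x ∈ 𝒜 a
  comm : ∀ x, α (β x) = β (α x)
  mult_alpha : ∀ a b c, ∀ x ∈ 𝒜 a, ∀ y ∈ 𝒜 b, ∀ z ∈ 𝒜 c,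
    α (m x y z) = m (α x) (α y) (α z)
  mult_beta : ∀ a b c, ∀ x ∈ 𝒜 a, ∀ y ∈ 𝒜 b, ∀ z ∈ 𝒜 c,
    β (m x y z) = m (β x) (β y) (β z)
  skew : ∀ a b c, ∀ x ∈ 𝒜 a, ∀ y ∈ 𝒜 b, ∀ z ∈ 𝒜 c,
    m (β x) (β y) (α z) = -(χ.ε a b • m (β y) (β x) (α z))
  identity3 : ∀ a₁ a₂ a₃ a₄ a₅, ∀ x₁ ∈ 𝒜 a₁, ∀ x₂ ∈ 𝒜 a₂, ∀ x₃ ∈ 𝒜 a₃,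
      ∀ x₄ ∈ 𝒜 a₄, ∀ x₅ ∈ 𝒜 a₅,
    m (α (β x₄)) (α (β x₅)) (m x₁ x₂ x₃)
      = m (preC χ m α β a₄ a₅ a₁ (β x₄) (β x₅) x₁) (β x₂) (β x₃)
        + χ.ε a₁ (a₄ + a₅) • m (β x₁) (preC χ m α β a₄ a₅ a₂ (β x₄) (β x₅) x₂) (β x₃)
        + χ.ε (a₁ + a₂) (a₄ + a₅) • m (β x₁) (β x₂) (m (α x₄) (α x₅) x₃)
  identity4 : ∀ a₁ a₂ a₃ a₄ a₅, ∀ x₁ ∈ 𝒜 a₁, ∀ x₂ ∈ 𝒜 a₂, ∀ x₃ ∈ 𝒜 a₃,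
      ∀ x₄ ∈ 𝒜 a₄, ∀ x₅ ∈ 𝒜 a₅,
    m (preC χ m α β a₄ a₅ a₁ (β x₄) (β x₅) x₁) (β x₂) (β x₃)
      = χ.ε a₄ (a₁ + a₅) • m (α (β x₅)) (β x₁) (m (α x₄) x₂ x₃)
        + χ.ε a₁ (a₄ + a₅) • m (β x₁) (α (β x₄)) (m (α x₅) x₂ x₃)
        + m (α (β x₄)) (α (β x₅)) (m x₁ x₂ x₃)

/-- A BiHom-dendriform color algebra structure. -/
structure IsBiHomDendriformColor (𝒜 : Γ → Submodule K g) (χ : Bicharacter K Γ)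
    (pl pr : g →ₗ[K] g →ₗ[K] g) (α β : g →ₗ[K] g) : Prop where
  pl_even : ∀ a b, ∀ x ∈ 𝒜 a, ∀ y ∈ 𝒜 b, pl x y ∈ 𝒜 (a + b)
  pr_even : ∀ a b, ∀ x ∈ 𝒜 a, ∀ y ∈ 𝒜 b, pr x y ∈ 𝒜 (a + b)
  alpha_even : ∀ a, ∀ x ∈ 𝒜 a, α x ∈ 𝒜 a
  beta_even : ∀ a, ∀ x ∈ 𝒜 a, β x ∈ 𝒜 a
  comm : ∀ x, α (β x) = β (α x)
  alpha_pl : ∀ a b, ∀ x ∈ 𝒜 a, ∀ y ∈ 𝒜 b, α (pl x y) = pl (α x) (α y)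
  beta_pl : ∀ a b, ∀ x ∈ 𝒜 a, ∀ y ∈ 𝒜 b, β (pl x y) = pl (β x) (β y)
  alpha_pr : ∀ a b, ∀ x ∈ 𝒜 a, ∀ y ∈ 𝒜 b, α (pr x y) = pr (α x) (α y)
  beta_pr : ∀ a b, ∀ x ∈ 𝒜 a, ∀ y ∈ 𝒜 b, β (pr x y) = pr (β x) (β y)
  ax1 : ∀ a b c, ∀ x ∈ 𝒜 a, ∀ y ∈ 𝒜 b, ∀ z ∈ 𝒜 c,
    pl (pl x y) (β z) = pl (α x) (pl y z + pr y z)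
  ax2 : ∀ a b c, ∀ x ∈ 𝒜 a, ∀ y ∈ 𝒜 b, ∀ z ∈ 𝒜 c,
    pl (pr x y) (β z) = pr (α x) (pl y z)
  ax3 : ∀ a b c, ∀ x ∈ 𝒜 a, ∀ y ∈ 𝒜 b, ∀ z ∈ 𝒜 c,
    pr (α x) (pr y z) = pr (pl x y + pr x y) (β z)

/-- A noncommutative 3-BiHom-pre-Poisson color algebra structure. -/
structure IsNC3BiHomPrePoissonColor (𝒜 : Γ → Submodule K g) (χ : Bicharacter K Γ)
    (m : g →ₗ[K] g →ₗ[K] g →ₗ[K] g) (pl pr : g →ₗ[K] g →ₗ[K] g)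
    (α β : g ≃ₗ[K] g) : Prop where
  prelie : Is3BiHomPreLieColor 𝒜 χ m α β
  dend : IsBiHomDendriformColor 𝒜 χ pl pr α.toLinearMap β.toLinearMap
  comp1 : ∀ a b c d, ∀ x ∈ 𝒜 a, ∀ y ∈ 𝒜 b, ∀ z ∈ 𝒜 c, ∀ t ∈ 𝒜 d,
    m (α (β (β x))) (α (β (β y))) (pl z (α t))
        - pl (m (β (β x)) (β (β y)) z) (α (β t))
      = χ.ε c (a + b) •
          pl (β z)
            (m (α (β x)) (α (β y)) (α t) - χ.ε b d • m (α (β x)) (β t) (α (α y))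
              + χ.ε a (b + d) • m (α (β y)) (β t) (α (α x)))
  comp2 : ∀ a b c d, ∀ x ∈ 𝒜 a, ∀ y ∈ 𝒜 b, ∀ z ∈ 𝒜 c, ∀ t ∈ 𝒜 d,
    m (α (β x)) (α (α (β y))) (pr (α z) t)
        - χ.ε (a + b) c • pr (α (β z)) (m (α x) (α (α y)) t)
      = pr (m (β x) (α (β y)) (α z) - χ.ε b c • m (β x) (β z) (α (α y))
            + χ.ε a (b + c) • m (α (β y)) (β z) (α x)) (β t)
  comp3 : ∀ a b c d, ∀ x ∈ 𝒜 a, ∀ y ∈ 𝒜 b, ∀ z ∈ 𝒜 c, ∀ t ∈ 𝒜 d,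
    m (α (β x)) (β (pl y z)) (α (α (β t))) + m (α (β x)) (β (pr y z)) (α (α (β t)))
      = χ.ε a b • pr (α (β y)) (m (α x) (β z) (α (α t)))
        + χ.ε c d • pl (m (β x) (β y) (α (β t))) (α (β z))

/-- the sum of the two operations of a BiHom-dendriform color
algebra is a BiHom-associative color algebra multiplication. -/
theorem dendriform_to_assoc
    (𝒜 : Γ → Submodule K g) (χ : Bicharacter K Γ)
    (pl pr : g →ₗ[K] g →ₗ[K] g) (α β : g →ₗ[K] g)
    (h : IsBiHomDendriformColor 𝒜 χ pl pr α β) :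
    IsBiHomAssocColor 𝒜 χ (pl + pr) α β := by
  refine ⟨?_, h.alpha_even, h.beta_even, h.comm, ?_, ?_, ?_⟩
  · intro a b x hx y hy
    exact (𝒜 (a + b)).add_mem (h.pl_even a b x hx y hy) (h.pr_even a b x hx y hy)
  · intro a b x hx y hy
    simp only [LinearMap.add_apply, map_add, h.alpha_pl a b x hx y hy, h.alpha_pr a b x hx y hy]
  · intro a b x hx y hy
    simp only [LinearMap.add_apply, map_add, h.beta_pl a b x hx y hy, h.beta_pr a b x hx y hy]
  · intro a b c x hx y hy z hz
    have h1 := h.ax1 a b c x hx y hy z hz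
    have h2 := h.ax2 a b c x hx y hy z hz
    have h3 := h.ax3 a b c x hx y hy z hz
    simp only [LinearMap.add_apply, map_add] at h1 h2 h3 ⊢
    rw [h1, h2, h3]
    abel
end

section
/- Let T : V → g be a Kupershmidt operator on a BiHom-associative color algebra (g, μ, ε, α, β) with respect to a bimodule (V, 𝔩, 𝔯, α_V, β_V). Then V carries a BiHom-dendriform color algebra structure (V, ≺_V, ≻_V, ε, α_V, β_V) with the even bilinear operations u ≺_V v = ε(u,v) 𝔯(T(v))u and u ≻_V v = 𝔩(T(u))v for all homogeneous u,v ∈ V. -/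
variable {K : Type*} [Field K] {Γ : Type*} [AddCommGroup Γ]
variable {g : Type*} [AddCommGroup g] [Module K g]
variable {V : Type*} [AddCommGroup V] [Module K V]

/-- a Kupershmidt operator on a BiHom-associative color algebra
induces a BiHom-dendriform color algebra structure on the bimodule. -/
theorem kupershmidt_induced_dendriform
    (𝒜 : Γ → Submodule K g) (𝒱 : Γ → Submodule K V) (χ : Bicharacter K Γ)
    (μ : g →ₗ[K] g →ₗ[K] g) (α β : g →ₗ[K] g)
    (l r : g →ₗ[K] V →ₗ[K] V) (αV βV : V →ₗ[K] V)
    (halg : IsBiHomAssocColor 𝒜 χ μ α β)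
    (hmod : IsAssocColorBimodule 𝒜 𝒱 χ μ α β l r αV βV)
    (T : V →ₗ[K] g)
    (hTe : ∀ a, ∀ v ∈ 𝒱 a, T v ∈ 𝒜 a)
    (hTα : ∀ v, T (αV v) = α (T v)) (hTβ : ∀ v, T (βV v) = β (T v))
    (hT : ∀ a b : Γ, ∀ u ∈ 𝒱 a, ∀ v ∈ 𝒱 b,
      μ (T u) (T v) = T (l (T u) v + χ.ε a b • r (T v) u))
    (pl' pr' : V →ₗ[K] V →ₗ[K] V)
    (hpl' : ∀ a b : Γ, ∀ u ∈ 𝒱 a, ∀ v ∈ 𝒱 b, pl' u v = χ.ε a b • r (T v) u)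
    (hpr' : ∀ u v, pr' u v = l (T u) v) :
    IsBiHomDendriformColor 𝒱 χ pl' pr' αV βV := by
  have hple : ∀ a b, ∀ x ∈ 𝒱 a, ∀ y ∈ 𝒱 b, pl' x y ∈ 𝒱 (a + b) := by
    intro a b x hx y hy
    rw [hpl' a b x hx y hy, add_comm a b]
    exact Submodule.smul_mem _ _ (hmod.r_even b a _ (hTe b y hy) x hx)
  have hpre : ∀ a b, ∀ x ∈ 𝒱 a, ∀ y ∈ 𝒱 b, pr' x y ∈ 𝒱 (a + b) := by
    intro a b x hx y hy
    rw [hpr']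
    exact hmod.l_even a b _ (hTe a x hx) y hy
  have hTs : ∀ a b, ∀ x ∈ 𝒱 a, ∀ y ∈ 𝒱 b, T (pl' x y + pr' x y) = μ (T x) (T y) := by
    intro a b x hx y hy
    rw [hpl' a b x hx y hy, hpr', hT a b x hx y hy, add_comm]
  refine ⟨hple, hpre, hmod.alphaV_even, hmod.betaV_even, hmod.commV, ?_, ?_, ?_, ?_, ?_, ?_, ?_⟩
  · intro a b x hx y hy
    rw [hpl' a b x hx y hy, hpl' a b _ (hmod.alphaV_even a x hx) _ (hmod.alphaV_even b y hy),
      map_smul, hmod.alphaV_r b a _ (hTe b y hy) x hx, hTα]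
  · intro a b x hx y hy
    rw [hpl' a b x hx y hy, hpl' a b _ (hmod.betaV_even a x hx) _ (hmod.betaV_even b y hy),
      map_smul, hmod.betaV_r b a _ (hTe b y hy) x hx, hTβ]
  · intro a b x hx y hy
    rw [hpr', hpr', hmod.alphaV_l a b _ (hTe a x hx) y hy, hTα]
  · intro a b x hx y hy
    rw [hpr', hpr', hmod.betaV_l a b _ (hTe a x hx) y hy, hTβ]
  · intro a b c x hx y hy z hz
    rw [hpl' (a + b) c _ (hple a b x hx y hy) _ (hmod.betaV_even c z hz),
      hpl' a (b + c) _ (hmod.alphaV_even a x hx) _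
        (Submodule.add_mem _ (hple b c y hy z hz) (hpre b c y hy z hz)),
      hTs b c y hy z hz, hmod.r_mu b c a _ (hTe b y hy) _ (hTe c z hz) x hx,
      hpl' a b x hx y hy, hTβ, map_smul, smul_smul, smul_smul, χ.add_left, χ.add_right]
    congr 1
    ring
  · intro a b c x hx y hy z hz
    rw [hpl' (a + b) c _ (hpre a b x hx y hy) _ (hmod.betaV_even c z hz), hpr', hpr',
      hpl' b c y hy z hz, hTα, hTβ, map_smul,
      hmod.l_r a c b _ (hTe a x hx) _ (hTe c z hz) y hy, smul_smul, χ.add_left]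
    congr 1
    ring
  · intro a b c x hx y hy z hz
    rw [hpr' (αV x), hpr' y z, hpr' _ (βV z), hTs a b x hx y hy, hTα,
      hmod.l_mu a b c _ (hTe a x hx) _ (hTe b y hy) z hz]
end

section
/- Let (g, {·,·,·}, ≺, ≻, ε) be a noncommutative 3-pre-Poisson color algebra and let α, β be two even commuting algebra automorphisms of g (bijective, preserving {·,·,·}, ≺ and ≻). Then (g, {·,·,·}_{α,β}, ≺_{α,β}, ≻_{α,β}, ε, α, β) is a noncommutative 3-BiHom-pre-Poisson color algebra, where {x,y,z}_{α,β} = {α(x),α(y),β(z)}, x ≺_{α,β} y = α(x) ≺ β(y), and x ≻_{α,β} y = α(x) ≻ β(y) for all homogeneous x,y,z ∈ g. -/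
variable {K : Type*} [Field K] {Γ : Type*} [AddCommGroup Γ]
variable {g : Type*} [AddCommGroup g] [Module K g]
variable {V : Type*} [AddCommGroup V] [Module K V]

/-- twisting a noncommutative 3-pre-Poisson color algebra by two
even commuting algebra automorphisms yields a noncommutative
3-BiHom-pre-Poisson color algebra. -/
theorem twist_nc3PrePoisson
    (𝒜 : Γ → Submodule K g) (χ : Bicharacter K Γ)
    (m : g →ₗ[K] g →ₗ[K] g →ₗ[K] g) (pl pr : g →ₗ[K] g →ₗ[K] g)
    (h : IsNC3BiHomPrePoissonColor 𝒜 χ m pl pr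
      (LinearEquiv.refl K g) (LinearEquiv.refl K g))
    (α β : g ≃ₗ[K] g)
    (hαe : ∀ a, ∀ x ∈ 𝒜 a, α x ∈ 𝒜 a) (hβe : ∀ a, ∀ x ∈ 𝒜 a, β x ∈ 𝒜 a)
    (hcomm : ∀ x, α (β x) = β (α x))
    (hαm : ∀ x y z, α (m x y z) = m (α x) (α y) (α z))
    (hβm : ∀ x y z, β (m x y z) = m (β x) (β y) (β z))
    (hαl : ∀ x y, α (pl x y) = pl (α x) (α y))
    (hβl : ∀ x y, β (pl x y) = pl (β x) (β y))
    (hαr : ∀ x y, α (pr x y) = pr (α x) (α y))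
    (hβr : ∀ x y, β (pr x y) = pr (β x) (β y))
    (m' : g →ₗ[K] g →ₗ[K] g →ₗ[K] g)
    (hm' : ∀ x y z, m' x y z = m (α x) (α y) (β z))
    (pl' pr' : g →ₗ[K] g →ₗ[K] g)
    (hpl' : ∀ x y, pl' x y = pl (α x) (β y))
    (hpr' : ∀ x y, pr' x y = pr (α x) (β y)) :
    IsNC3BiHomPrePoissonColor 𝒜 χ m' pl' pr' α β := by
  have hc : ∀ x, β (α x) = α (β x) := fun x => (hcomm x).symm
  have hs : ∀ x, α (β (α.symm x)) = β x := fun x => by rw [hcomm]; simp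
  obtain ⟨hp, hd, c1, c2, c3⟩ := h
  refine ⟨⟨?_, hαe, hβe, hcomm, ?_, ?_, ?_, ?_, ?_⟩,
    ⟨?_, ?_, hαe, hβe, hcomm, ?_, ?_, ?_, ?_, ?_, ?_, ?_⟩, ?_, ?_, ?_⟩
  · intro a b c x hx y hy z hz
    rw [hm']
    exact hp.bracket_even a b c _ (hαe _ _ hx) _ (hαe _ _ hy) _ (hβe _ _ hz)
  · intro a b c x hx y hy z hz
    simp only [hm', hαm, hc]
  · intro a b c x hx y hy z hz
    simp only [hm', hβm, hc]
  · intro a b c x hx y hy z hz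
    have := hp.skew a b c _ (hαe _ _ (hβe _ _ hx)) _ (hαe _ _ (hβe _ _ hy)) _
      (hαe _ _ (hβe _ _ hz))
    simpa only [hm', hc, LinearEquiv.refl_apply] using this
  · intro a₁ a₂ a₃ a₄ a₅ x₁ h₁ x₂ h₂ x₃ h₃ x₄ h₄ x₅ h₅
    have := hp.identity3 a₁ a₂ a₃ a₄ a₅ _ (hαe _ _ (hβe _ _ h₁)) _ (hαe _ _ (hβe _ _ h₂)) _
      (hβe _ _ (hβe _ _ h₃)) _ (hαe _ _ (hαe _ _ (hβe _ _ h₄)))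
      _ (hαe _ _ (hαe _ _ (hβe _ _ h₅)))
    simpa [preC, hm', hc, hs, hαm, hβm] using this
  · intro a₁ a₂ a₃ a₄ a₅ x₁ h₁ x₂ h₂ x₃ h₃ x₄ h₄ x₅ h₅
    have := hp.identity4 a₁ a₂ a₃ a₄ a₅ _ (hαe _ _ (hβe _ _ h₁)) _ (hαe _ _ (hβe _ _ h₂)) _
      (hβe _ _ (hβe _ _ h₃)) _ (hαe _ _ (hαe _ _ (hβe _ _ h₄)))
      _ (hαe _ _ (hαe _ _ (hβe _ _ h₅)))
    simpa [preC, hm', hc, hs, hαm, hβm] using this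
  · intro a b x hx y hy
    rw [hpl']
    exact hd.pl_even a b _ (hαe _ _ hx) _ (hβe _ _ hy)
  · intro a b x hx y hy
    rw [hpr']
    exact hd.pr_even a b _ (hαe _ _ hx) _ (hβe _ _ hy)
  · intro a b x hx y hy
    simp [hpl', hαl, hc]
  · intro a b x hx y hy
    simp [hpl', hβl, hc]
  · intro a b x hx y hy
    simp [hpr', hαr, hc]
  · intro a b x hx y hy
    simp [hpr', hβr, hc]
  · intro a b c x hx y hy z hz
    have := hd.ax1 a b c _ (hαe _ _ (hαe _ _ hx)) _ (hαe _ _ (hβe _ _ hy)) _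
      (hβe _ _ (hβe _ _ hz))
    simpa [hpl', hpr', hαl, hβl, hαr, hβr, hc] using this
  · intro a b c x hx y hy z hz
    have := hd.ax2 a b c _ (hαe _ _ (hαe _ _ hx)) _ (hαe _ _ (hβe _ _ hy)) _
      (hβe _ _ (hβe _ _ hz))
    simpa [hpl', hpr', hαl, hβl, hαr, hβr, hc] using this
  · intro a b c x hx y hy z hz
    have := hd.ax3 a b c _ (hαe _ _ (hαe _ _ hx)) _ (hαe _ _ (hβe _ _ hy)) _
      (hβe _ _ (hβe _ _ hz))
    simpa [hpl', hpr', hαl, hβl, hαr, hβr, hc] using this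
  · intro a b c d x hx y hy z hz t ht
    have := c1 a b c d _ (hαe _ _ (hαe _ _ (hβe _ _ (hβe _ _ hx))))
      _ (hαe _ _ (hαe _ _ (hβe _ _ (hβe _ _ hy))))
      _ (hαe _ _ (hβe _ _ hz)) _ (hαe _ _ (hβe _ _ (hβe _ _ ht)))
    simpa [hm', hαm, hβm, hpl', hpr', hαl, hβl, hαr, hβr, hc] using this
  · intro a b c d x hx y hy z hz t ht
    have := c2 a b c d _ (hαe _ _ (hαe _ _ (hβe _ _ hx)))
      _ (hαe _ _ (hαe _ _ (hαe _ _ (hβe _ _ hy))))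
      _ (hαe _ _ (hαe _ _ (hβe _ _ hz))) _ (hβe _ _ (hβe _ _ ht))
    simpa [hm', hαm, hβm, hpl', hpr', hαl, hβl, hαr, hβr, hc] using this
  · intro a b c d x hx y hy z hz t ht
    have := c3 a b c d _ (hαe _ _ (hαe _ _ (hβe _ _ hx)))
      _ (hαe _ _ (hαe _ _ (hβe _ _ hy)))
      _ (hαe _ _ (hβe _ _ (hβe _ _ hz))) _ (hαe _ _ (hαe _ _ (hβe _ _ (hβe _ _ ht))))
    simpa [hm', hαm, hβm, hpl', hpr', hαl, hβl, hαr, hβr, hc] using this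
end
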